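/- arXiv:2210.00561 — 2 statements merged into one kernel-verified Lean document; each statement's English description precedes it below -/
import Mathlib

section
/- Let −d < −3 be a squarefree integer with −d ≢ 1 (mod 4), let k > 1 be an integer with gcd(k, 2d) = 1, and let x, y, z be positive integers with gcd(x, y) = 1 and x² + d·y² = 2k^z. Then there exist positive integers x₁, y₁, z₁ with gcd(x₁, y₁) = 1 such that z₁ divides z, the ratio z/z₁ is odd, x₁² + d·y₁² = 2k^{z₁}, the ideal class group of the imaginary quadratic field K = ℚ(√(−d)) contains a cyclic subgroup of order 2z₁, and in particular z₁ divides the class number h(−d) of K. -/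
open IntermediateField NumberField

/-- The quadratic field `ℚ(√D)`, realized inside `ℂ` by adjoining the principal
square root of `D`. -/
noncomputable def quadField (D : ℤ) : IntermediateField ℚ ℂ :=
  ℚ⟮(D : ℂ) ^ ((1 : ℂ) / 2)⟯

/-- The class number of the quadratic field `ℚ(√D)`. -/
noncomputable def quadClassNumber (D : ℤ) : ℕ :=
  Nat.card (ClassGroup (𝓞 (quadField D)))

section ideals
variable {R : Type*} [CommRing R]

lemma ideal_mul_conj {m α α' t c u v : R} (hs : α + α' = t) (hp : α * α' = m * c)
    (huv : u * m + v * t = 1) :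
    Ideal.span {m, α} * Ideal.span {m, α'} = Ideal.span {m} := by
  apply le_antisymm
  · rw [Ideal.span_pair_mul_span_pair, Ideal.span_le]
    rintro w (rfl | rfl | rfl | rfl) <;> rw [SetLike.mem_coe, Ideal.mem_span_singleton]
    · exact dvd_mul_right _ _
    · exact dvd_mul_right _ _
    · exact dvd_mul_left _ _
    · exact ⟨c, hp⟩
  · rw [Ideal.span_singleton_le_iff_mem]
    have hm : m ∈ Ideal.span {m, α} := Ideal.subset_span (by simp)
    have hm' : m ∈ Ideal.span {m, α'} := Ideal.subset_span (by simp)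
    have ha : α ∈ Ideal.span {m, α} := Ideal.subset_span (by simp)
    have ha' : α' ∈ Ideal.span {m, α'} := Ideal.subset_span (by simp)
    have h : u * (m * m) + v * (m * α') + v * (α * m)
        ∈ Ideal.span {m, α} * Ideal.span {m, α'} := add_mem (add_mem (Ideal.mul_mem_left _ _ (Ideal.mul_mem_mul hm hm'))
      (Ideal.mul_mem_left _ _ (Ideal.mul_mem_mul hm ha')))
      (Ideal.mul_mem_left _ _ (Ideal.mul_mem_mul ha hm'))
    have e : u * (m * m) + v * (m * α') + v * (α * m) = m := by
      linear_combination m * huv + v * m * hs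
    rwa [e] at h

lemma ideal_two_mul {α α' K u v : R} (hp : α * α' = 2 * K) (huv : u * 2 + v * K = 1) :
    Ideal.span {2, α} * Ideal.span {K, α} = Ideal.span {α} := by
  apply le_antisymm
  · rw [Ideal.span_pair_mul_span_pair, Ideal.span_le]
    rintro w (rfl | rfl | rfl | rfl) <;> rw [SetLike.mem_coe, Ideal.mem_span_singleton]
    · exact ⟨α', hp.symm⟩
    · exact dvd_mul_left _ _
    · exact dvd_mul_right _ _
    · exact dvd_mul_left _ _
  · rw [Ideal.span_singleton_le_iff_mem]
    have hm : (2 : R) ∈ Ideal.span {2, α} := Ideal.subset_span (by simp)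
    have hK : K ∈ Ideal.span {K, α} := Ideal.subset_span (by simp)
    have ha : α ∈ Ideal.span {2, α} := Ideal.subset_span (by simp)
    have ha' : α ∈ Ideal.span {K, α} := Ideal.subset_span (by simp)
    have h : u * (2 * α) + v * (α * K) ∈ Ideal.span {2, α} * Ideal.span {K, α} :=
      add_mem (Ideal.mul_mem_left _ _ (Ideal.mul_mem_mul hm ha'))
        (Ideal.mul_mem_left _ _ (Ideal.mul_mem_mul ha hK))
    have e : u * (2 * α) + v * (α * K) = α := by linear_combination α * huv
    rwa [e] at h

lemma ideal_two_sq {α α' K u v x : R} (hs : α + α' = 2 * x) (hp : α * α' = 2 * K)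
    (huv : u * 2 + v * K = 1) :
    Ideal.span {2, α} * Ideal.span {2, α} = Ideal.span {2} := by
  apply le_antisymm
  · rw [Ideal.span_pair_mul_span_pair, Ideal.span_le]
    rintro w (rfl | rfl | rfl | rfl) <;> rw [SetLike.mem_coe, Ideal.mem_span_singleton]
    · exact dvd_mul_right _ _
    · exact dvd_mul_right _ _
    · exact dvd_mul_left _ _
    · exact ⟨x * α - K, by linear_combination α * hs - hp⟩
  · rw [Ideal.span_singleton_le_iff_mem]
    have hm : (2 : R) ∈ Ideal.span {2, α} := Ideal.subset_span (by simp)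
    have ha : α ∈ Ideal.span {2, α} := Ideal.subset_span (by simp)
    have h : u * (2 * 2) + (v * x) * (2 * α) + (-v) * (α * α)
        ∈ Ideal.span {2, α} * Ideal.span {2, α} :=
      add_mem (add_mem (Ideal.mul_mem_left _ _ (Ideal.mul_mem_mul hm hm))
        (Ideal.mul_mem_left _ _ (Ideal.mul_mem_mul hm ha)))
        (Ideal.mul_mem_left _ _ (Ideal.mul_mem_mul ha ha))
    have e : u * (2 * 2) + (v * x) * (2 * α) + (-v) * (α * α) = 2 := by
      linear_combination 2 * huv - v * α * hs + v * hp
    rwa [e] at h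

lemma ideal_coprime {m n α α' t u v : R} (hs : α + α' = t) (huv : u * m + v * t = 1) :
    IsCoprime (Ideal.span {m, α}) (Ideal.span {n, α'}) := by
  rw [Ideal.isCoprime_iff_exists]
  refine ⟨u * m + v * α, ?_, v * α', ?_, by linear_combination huv + v * hs⟩
  · exact add_mem (Ideal.mul_mem_left _ _ (Ideal.subset_span (by simp)))
      (Ideal.mul_mem_left _ _ (Ideal.subset_span (by simp)))
  · exact Ideal.mul_mem_left _ _ (Ideal.subset_span (by simp))

lemma ideal_pow {k α α' t c u v u' v' : R} {z : ℕ} (hz : 0 < z) (hs : α + α' = t)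
    (hp : α * α' = k ^ z * c)
    (huv : u * k + v * t = 1) (huv' : u' * k ^ z + v' * t = 1) :
    Ideal.span {k, α} ^ z = Ideal.span {k ^ z, α} := by
  have h1 := ideal_mul_conj hs hp huv'
  have hp' : α * α' = k * (k ^ (z - 1) * c) := by
    rw [hp, ← mul_assoc, ← pow_succ', Nat.sub_add_cancel hz]
  have h2 := ideal_mul_conj hs hp' huv
  have h3 : Ideal.span {k, α} ^ z * Ideal.span {k, α'} ^ z
      = Ideal.span {k ^ z, α} * Ideal.span {k ^ z, α'} := by
    rw [← mul_pow, h1, h2, Ideal.span_singleton_pow]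
  apply le_antisymm
  · apply Ideal.le_of_dvd
    have hc : IsCoprime (Ideal.span {k ^ z, α}) (Ideal.span {k, α'} ^ z) :=
      (ideal_coprime hs huv').pow_right
    exact hc.dvd_of_dvd_mul_right (Dvd.intro _ h3.symm)
  · apply Ideal.le_of_dvd
    have hc : IsCoprime (Ideal.span {k, α} ^ z) (Ideal.span {k ^ z, α'}) :=
      (ideal_coprime hs huv).pow_left
    exact hc.dvd_of_dvd_mul_right (Dvd.intro _ h3)

end ideals

lemma order_lemma {G : Type*} [Group G] {g p : G} {z : ℕ} (hz : 0 < z) (h1 : p * g ^ z = 1)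
    (h2 : p * p = 1) (h3 : p ≠ 1) :
    ∃ z₁ : ℕ, 0 < z₁ ∧ z₁ ∣ z ∧ Odd (z / z₁) ∧ orderOf g = 2 * z₁ ∧ p * g ^ z₁ = 1 := by
  have hpz : g ^ z = p := by
    rw [← mul_right_inj p, h1, h2]
  have hd : orderOf g ∣ 2 * z := by
    rw [orderOf_dvd_iff_pow_eq_one, mul_comm, pow_mul, hpz, pow_two, h2]
  have hnd : ¬ orderOf g ∣ z := by
    rw [orderOf_dvd_iff_pow_eq_one, hpz]; exact h3
  have hev : 2 ∣ orderOf g := by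
    by_contra h
    exact hnd (((Nat.prime_two.coprime_iff_not_dvd.2 h).symm.dvd_of_dvd_mul_left hd))
  obtain ⟨z₁, hz₁⟩ := hev
  rw [hz₁] at hd hnd
  have hdz : z₁ ∣ z := Nat.dvd_of_mul_dvd_mul_left two_pos hd
  obtain ⟨m, rfl⟩ := hdz
  have hz0 : 0 < z₁ := Nat.pos_of_mul_pos_right hz
  have hm : Odd m := by
    rw [← Nat.not_even_iff_odd]
    rintro ⟨j, rfl⟩
    exact hnd ⟨j, by ring⟩
  refine ⟨z₁, hz0, Dvd.intro _ rfl, by rwa [Nat.mul_div_cancel_left _ hz0], hz₁, ?_⟩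
  obtain ⟨j, rfl⟩ := hm
  have : g ^ (z₁ * (2 * j + 1)) = g ^ z₁ := by
    rw [show z₁ * (2 * j + 1) = (2 * z₁) * j + z₁ by ring, pow_add, pow_mul, ← hz₁,
      pow_orderOf_eq_one, one_pow, one_mul]
  rwa [this] at h1

/-- A generator of a principal ideal with `I * σ I = (n)` has norm `n`. -/
lemma norm_of_gen {R : Type*} [CommRing R] {D : ℤ} (hD : D ≤ 0) (e : ℤ√D ≃+* R) (b : ℤ√D) (n : ℤ)
    (hn : 0 ≤ n) (h : Ideal.span {e b} * Ideal.span {e (star b)} = Ideal.span {(n : R)}) :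
    b.norm = n := by
  rw [Ideal.span_singleton_mul_span_singleton, ← map_mul, ← Zsqrtd.norm_eq_mul_conj,
    ← map_intCast e] at h
  have h1 := Ideal.span_singleton_le_span_singleton.1 h.le
  have h2 := Ideal.span_singleton_le_span_singleton.1 h.ge
  rw [map_dvd_iff e, Zsqrtd.intCast_dvd_intCast] at h1 h2
  exact Int.dvd_antisymm (Zsqrtd.norm_nonneg hD b) hn h2 h1

theorem main_dedekind {R : Type*} [CommRing R] [IsDedekindDomain R] (d : ℤ) (hd3 : 3 < d)
    (e : ℤ√(-d) ≃+* R)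
    (k : ℤ) (hk : 1 < k) (hcop : Int.gcd k (2 * d) = 1)
    (x y z : ℕ) (hz : 0 < z) (hxy : Nat.gcd x y = 1)
    (heq : (x : ℤ) ^ 2 + d * (y : ℤ) ^ 2 = 2 * k ^ z) :
    ∃ x₁ y₁ z₁ : ℕ, 0 < x₁ ∧ 0 < y₁ ∧ 0 < z₁ ∧ Nat.gcd x₁ y₁ = 1 ∧
      z₁ ∣ z ∧ Odd (z / z₁) ∧
      (x₁ : ℤ) ^ 2 + d * (y₁ : ℤ) ^ 2 = 2 * k ^ z₁ ∧
      ∃ g : ClassGroup R, orderOf g = 2 * z₁ := by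
  have hk2d : IsCoprime k (2 * d) := Int.isCoprime_iff_gcd_eq_one.2 hcop
  have hk2 : IsCoprime k 2 := hk2d.of_mul_right_left
  have hkd : IsCoprime k d := hk2d.of_mul_right_right
  have hxyZ : IsCoprime (x : ℤ) (y : ℤ) := Nat.isCoprime_iff_coprime.2 hxy
  have hkx : IsCoprime k (x : ℤ) := by
    rw [Int.isCoprime_iff_gcd_eq_one]
    change Nat.Coprime k.natAbs (x : ℤ).natAbs
    apply Nat.coprime_of_dvd
    intro p hp h1 h2
    have h1' : (p : ℤ) ∣ k := Int.natCast_dvd.2 h1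
    have h2' : (p : ℤ) ∣ x := Int.natCast_dvd.2 h2
    have hpp : Prime (p : ℤ) := Nat.prime_iff_prime_int.1 hp
    have h3 : (p : ℤ) ∣ d * (y : ℤ) ^ 2 := by
      have : d * (y : ℤ) ^ 2 = 2 * k ^ z - (x : ℤ) ^ 2 := by linarith
      rw [this]
      exact dvd_sub (Dvd.dvd.mul_left (dvd_pow h1' hz.ne') _) (dvd_pow h2' two_ne_zero)
    rcases hpp.dvd_or_dvd h3 with h4 | h4
    · exact hpp.not_isUnit (hkd.isUnit_of_dvd' h1' h4)
    · exact hpp.not_isUnit (hxyZ.isUnit_of_dvd' h2' (hpp.dvd_of_dvd_pow h4))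
  have hk2x : IsCoprime k (2 * x) := hk2.mul_right hkx
  have hkz2x : IsCoprime (k ^ z) (2 * x) := hk2x.pow_left
  have h2kz : IsCoprime 2 (k ^ z) := hk2.symm.pow_right
  set a : ℤ√(-d) := ⟨x, y⟩ with ha
  set α : R := e a with hα
  set α' : R := e (star a) with hα'
  have hs : α + α' = 2 * (x : R) := by
    have : a + star a = 2 * ((x : ℤ) : ℤ√(-d)) := by ext <;> simp [ha]; ring
    rw [hα, hα', ← map_add, this, map_mul, map_intCast, map_ofNat]; simp
  have hp : α * α' = 2 * (k : R) ^ z := by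
    have hn : a.norm = 2 * k ^ z := by
      rw [← heq, Zsqrtd.norm_def, ha]; ring
    rw [hα, hα', ← map_mul, ← Zsqrtd.norm_eq_mul_conj, hn, map_intCast]; simp
  obtain ⟨u1, v1, h1⟩ : ∃ u v : R, u * (k : R) + v * (2 * (x : R)) = 1 := by
    obtain ⟨u, v, h⟩ := hk2x
    exact ⟨u, v, by exact_mod_cast congrArg (Int.cast : ℤ → R) h⟩
  obtain ⟨u2, v2, h2⟩ : ∃ u v : R, u * (k : R) ^ z + v * (2 * (x : R)) = 1 := by
    obtain ⟨u, v, h⟩ := hkz2x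
    exact ⟨u, v, by exact_mod_cast congrArg (Int.cast : ℤ → R) h⟩
  obtain ⟨u3, v3, h3⟩ : ∃ u v : R, u * 2 + v * (k : R) ^ z = 1 := by
    obtain ⟨u, v, h⟩ := h2kz
    exact ⟨u, v, by exact_mod_cast congrArg (Int.cast : ℤ → R) h⟩
  set P : Ideal R := Ideal.span {2, α} with hP
  set B : Ideal R := Ideal.span {(k : R), α} with hB
  set B' : Ideal R := Ideal.span {(k : R), α'} with hB'
  have hPP : P * P = Ideal.span {2} := ideal_two_sq hs hp h3
  have hBz : B ^ z = Ideal.span {(k : R) ^ z, α} :=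
    ideal_pow hz hs (hp.trans (mul_comm _ _)) h1 h2
  have hPB : P * B ^ z = Ideal.span {α} := by rw [hBz]; exact ideal_two_mul hp h3
  have hBB : B * B' = Ideal.span {(k : R)} := by
    refine ideal_mul_conj (c := k ^ (z - 1) * 2) hs ?_ h1
    rw [hp, ← mul_assoc, ← pow_succ', Nat.sub_add_cancel hz, mul_comm]
  have hP' : Ideal.span {2, α'} = P := by
    rw [hP]
    apply le_antisymm <;> rw [Ideal.span_le] <;> rintro w (rfl | rfl)
    · exact Ideal.subset_span (by simp)
    · exact Ideal.mem_span_pair.2 ⟨x, -1, by linear_combination -hs⟩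
    · exact Ideal.subset_span (by simp)
    · exact Ideal.mem_span_pair.2 ⟨x, -1, by linear_combination -hs⟩
  -- characteristic zero
  have hinj : Function.Injective (Int.cast : ℤ → R) := by
    intro m n hmn
    rw [← map_intCast e, ← map_intCast e] at hmn
    exact Int.cast_injective (e.injective hmn)
  have hP0 : P ∈ nonZeroDivisors (Ideal R) := by
    rw [mem_nonZeroDivisors_iff_ne_zero]
    intro h
    have : (2 : R) ∈ P := Ideal.subset_span (by simp)
    rw [h, Ideal.zero_eq_bot, Ideal.mem_bot] at this
    have h2 : ((2 : ℤ) : R) = ((0 : ℤ) : R) := by simpa using this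
    exact absurd (hinj h2) (by norm_num)
  have hB0 : B ∈ nonZeroDivisors (Ideal R) := by
    rw [mem_nonZeroDivisors_iff_ne_zero]
    intro h
    have : (k : R) ∈ B := Ideal.subset_span (by simp)
    rw [h, Ideal.zero_eq_bot, Ideal.mem_bot] at this
    have h2 : (k : R) = ((0 : ℤ) : R) := by simpa using this
    exact absurd (hinj h2) (by omega)
  -- the conjugation
  let σ : R →+* R := (e : ℤ√(-d) →+* R).comp
    ((starRingEnd (ℤ√(-d))).comp (e.symm : R →+* ℤ√(-d)))
  have hσ : ∀ w, σ (e w) = e (star w) := fun w => by simp [σ, starRingEnd_apply]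
  have hσP : P.map σ = P := by
    rw [hP, Ideal.map_span, Set.image_pair, map_ofNat, hσ, hP']
  have hσB : B.map σ = B' := by
    rw [hB, Ideal.map_span, Set.image_pair, map_intCast, hσ]
  have key : ∀ (n : ℕ) (b : ℤ√(-d)), P * B ^ n = Ideal.span {e b} →
      b.norm = 2 * k ^ n := by
    intro n b hb
    apply norm_of_gen (by omega) e b _ (by positivity)
    have hb' : P * B' ^ n = Ideal.span {e (star b)} := by
      have := congrArg (Ideal.map σ) hb
      rwa [Ideal.map_mul, Ideal.map_pow, hσP, hσB, Ideal.map_span, Set.image_singleton, hσ] at this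
    rw [← hb, ← hb', mul_mul_mul_comm, hPP, ← mul_pow, hBB, Ideal.span_singleton_pow,
      Ideal.span_singleton_mul_span_singleton]
    simp
  let p : ClassGroup R := ClassGroup.mk0 ⟨P, hP0⟩
  let g : ClassGroup R := ClassGroup.mk0 ⟨B, hB0⟩
  have hpg : ∀ n : ℕ, p * g ^ n = ClassGroup.mk0 ⟨P * B ^ n, mul_mem hP0 (pow_mem hB0 n)⟩ := by
    intro n
    simp only [p, g]
    rw [← map_pow, ← map_mul]; rfl
  have hp1 : p ≠ 1 := by
    intro h
    rw [ClassGroup.mk0_eq_one_iff] at h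
    obtain ⟨γ, hγ⟩ := h
    obtain ⟨b, rfl⟩ := e.surjective γ
    have := key 0 b (by rw [pow_zero, mul_one]; exact hγ)
    rw [Zsqrtd.norm_def] at this
    have hb : b.im = 0 := by
      by_contra hne
      have : 1 ≤ b.im ^ 2 := by have := sq_pos_of_ne_zero hne; omega
      nlinarith [sq_nonneg b.re]
    rw [hb] at this
    have h2 : b.re * b.re = 2 := by linarith
    have : b.re < 2 := by nlinarith
    have : -2 < b.re := by nlinarith
    interval_cases b.re <;> omega
  have hpp : p * p = 1 := by
    simp only [p]
    rw [← map_mul, ← (ClassGroup.mk0_eq_one_iff (mul_mem hP0 hP0)).2]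
    · rfl
    · rw [hPP]; exact ⟨2, rfl⟩
  have hpgz : p * g ^ z = 1 := by
    rw [hpg, ClassGroup.mk0_eq_one_iff, hPB]; exact ⟨α, rfl⟩
  obtain ⟨z₁, hz₁, hdvd, hodd, hord, h⟩ := order_lemma hz hpgz hpp hp1
  rw [hpg, ClassGroup.mk0_eq_one_iff] at h
  obtain ⟨β, hβ⟩ := h
  obtain ⟨b, rfl⟩ := e.surjective β
  replace hβ : P * B ^ z₁ = Ideal.span {e b} := hβ
  have hnorm := key z₁ b hβ
  have hba : b ∣ a := by
    rw [← map_dvd_iff e, ← Ideal.span_singleton_le_span_singleton, ← hβ, ← hα, ← hPB]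
    exact Ideal.mul_mono_right (Ideal.pow_le_pow_right (Nat.le_of_dvd hz hdvd))
  have hbc : IsCoprime b.re b.im := Zsqrtd.isCoprime_of_dvd_isCoprime (a := a) hxyZ hba
  have heq1 : b.re ^ 2 + d * b.im ^ 2 = 2 * k ^ z₁ := by
    rw [← hnorm, Zsqrtd.norm_def]; ring
  refine ⟨b.re.natAbs, b.im.natAbs, z₁, ?_, ?_, hz₁, ?_, hdvd, hodd, ?_, g, hord⟩
  · rw [Int.natAbs_pos]
    intro h0
    rw [h0] at hbc heq1
    rw [isCoprime_zero_left, Int.isUnit_iff] at hbc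
    have : d = 2 * k ^ z₁ := by rcases hbc with h | h <;> rw [h] at heq1 <;> linarith
    have hkk : k ∣ d := by rw [this]; exact Dvd.dvd.mul_left (dvd_pow_self _ hz₁.ne') _
    have := hkd.isUnit_of_dvd' dvd_rfl hkk
    rw [Int.isUnit_iff] at this
    omega
  · rw [Int.natAbs_pos]
    intro h0
    rw [h0] at hbc heq1
    rw [isCoprime_zero_right, Int.isUnit_iff] at hbc
    have : 1 = 2 * k ^ z₁ := by rcases hbc with h | h <;> rw [h] at heq1 <;> linarith
    omega
  · exact Int.isCoprime_iff_gcd_eq_one.1 hbc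
  · rw [Int.natCast_natAbs, Int.natCast_natAbs, sq_abs, sq_abs]; exact heq1

/-- Integral elements have integer coordinates. -/
lemma integral_coords {d : ℤ} (hd : 3 < d) (hsf : Squarefree d) (hd4 : ¬ -d ≡ 1 [ZMOD 4])
    {s : ℂ} (hs : s * s = -d) {a b : ℚ} (h : IsIntegral ℤ ((a : ℂ) + b * s)) :
    ∃ m n : ℤ, a = m ∧ b = n := by
  have hconj : (starRingEnd ℂ) s = -s := by
    have h1 : (starRingEnd ℂ) s * (starRingEnd ℂ) s = s * s := by
      rw [← map_mul, hs]; simp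
    rcases mul_self_eq_mul_self_iff.1 h1 with h2 | h2
    · exfalso
      rw [Complex.conj_eq_iff_real] at h2
      obtain ⟨r, rfl⟩ := h2
      have : r * r = -(d : ℝ) := by exact_mod_cast hs
      have hdr : (3 : ℝ) < d := by exact_mod_cast hd
      nlinarith [mul_self_nonneg r]
    · exact h2
  have h' : IsIntegral ℤ ((a : ℂ) - b * s) := by
    have := h.map (starRingEnd ℂ).toIntAlgHom
    simpa [hconj, sub_eq_add_neg] using this
  have toZ : ∀ q : ℚ, IsIntegral ℤ (q : ℂ) → ∃ m : ℤ, q = m := by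
    intro q hq
    have h1 : IsIntegral ℤ q := by
      rw [← isIntegral_algebraMap_iff (B := ℂ) (algebraMap ℚ ℂ).injective]
      simpa using hq
    obtain ⟨m, hm⟩ := IsIntegrallyClosed.isIntegral_iff.1 h1
    exact ⟨m, by simpa using hm.symm⟩
  obtain ⟨m, hm⟩ := toZ (2 * a) (by
    have e : ((2 * a : ℚ) : ℂ) = (a + b * s) + (a - b * s) := by push_cast; ring
    rw [e]; exact h.add h')
  obtain ⟨n, hn⟩ := toZ (a ^ 2 + d * b ^ 2) (by
    have e : ((a ^ 2 + d * b ^ 2 : ℚ) : ℂ) = (a + b * s) * (a - b * s) := by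
      push_cast; linear_combination (b : ℂ) ^ 2 * hs
    rw [e]; exact h.mul h')
  have hsq : (2 * d * b) ^ 2 = ((d * (4 * n - m ^ 2) : ℤ) : ℚ) := by
    push_cast; rw [← hn, ← hm]; ring
  obtain ⟨t, ht⟩ := toZ (2 * d * b) (by
    refine IsIntegral.of_pow (n := 2) two_pos ?_
    have : ((2 * d * b : ℚ) : ℂ) ^ 2 = algebraMap ℤ ℂ (d * (4 * n - m ^ 2)) := by
      rw [← Rat.cast_pow, hsq]; simp
    rw [this]
    exact isIntegral_algebraMap)
  have ht2 : t ^ 2 = d * (4 * n - m ^ 2) := by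
    rw [ht] at hsq; exact_mod_cast hsq
  have hdt : d ∣ t := (hsf.dvd_pow_iff_dvd two_ne_zero).1 (Dvd.intro _ ht2.symm)
  obtain ⟨l, rfl⟩ := hdt
  have hd0 : d ≠ 0 := by omega
  have hl : 2 * b = l := by
    have : (d : ℚ) ≠ 0 := by exact_mod_cast hd0
    apply mul_left_cancel₀ this
    push_cast at ht; linarith
  have hml : m ^ 2 + d * l ^ 2 = 4 * n := by
    apply mul_left_cancel₀ hd0
    linear_combination ht2
  have hdm : d % 4 = 1 ∨ d % 4 = 2 := by
    have h0 : d % 4 ≠ 0 := by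
      intro h0
      have : (2 : ℤ) * 2 ∣ d := by omega
      have := hsf 2 this
      rw [Int.isUnit_iff] at this; omega
    have h3 : d % 4 ≠ 3 := by
      intro h3; apply hd4; rw [Int.ModEq]; omega
    omega
  have hpar : m % 2 = 0 ∧ l % 2 = 0 := by
    obtain ⟨q, hq⟩ : ∃ q, d = 4 * q + 1 ∨ d = 4 * q + 2 := ⟨d / 4, by omega⟩
    obtain ⟨m', hm'⟩ : ∃ q, m = 2 * q ∨ m = 2 * q + 1 := ⟨m / 2, by omega⟩
    obtain ⟨l', hl'⟩ : ∃ q, l = 2 * q ∨ l = 2 * q + 1 := ⟨l / 2, by omega⟩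
    rcases hq with rfl | rfl <;> rcases hm' with rfl | rfl <;> rcases hl' with rfl | rfl <;>
      ring_nf at hml <;> omega
  obtain ⟨m', rfl⟩ := Int.dvd_of_emod_eq_zero hpar.1
  obtain ⟨l', rfl⟩ := Int.dvd_of_emod_eq_zero hpar.2
  push_cast at hm hl
  exact ⟨m', l', by linarith, by linarith⟩

lemma mem_quad {s : ℂ} {d : ℤ} (hs : s * s = -d) {w : ℂ} (hw : w ∈ ℚ⟮s⟯) :
    ∃ a b : ℚ, w = a + b * s := by
  have hint : IsIntegral ℚ s := by
    refine IsIntegral.of_pow (n := 2) two_pos ?_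
    have : s ^ 2 = algebraMap ℚ ℂ (-d) := by rw [pow_two, hs]; simp
    rw [this]; exact isIntegral_algebraMap
  rw [← IntermediateField.mem_toSubalgebra,
    IntermediateField.adjoin_simple_toSubalgebra_of_isAlgebraic hint.isAlgebraic] at hw
  induction hw using Algebra.adjoin_induction with
  | mem x hx => rw [Set.mem_singleton_iff] at hx; exact ⟨0, 1, by simp [hx]⟩
  | algebraMap r => exact ⟨r, 0, by simp⟩
  | add x y _ _ hx hy =>
    obtain ⟨a, b, rfl⟩ := hx
    obtain ⟨a', b', rfl⟩ := hy
    exact ⟨a + a', b + b', by push_cast; ring⟩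
  | mul x y _ _ hx hy =>
    obtain ⟨a, b, rfl⟩ := hx
    obtain ⟨a', b', rfl⟩ := hy
    exact ⟨a * a' - d * b * b', a * b' + b * a', by
      push_cast; linear_combination (b : ℂ) * b' * hs⟩

theorem exists_equiv {d : ℤ} (hd : 3 < d) (hsf : Squarefree d) (hd4 : ¬ -d ≡ 1 [ZMOD 4]) :
    Nonempty (ℤ√(-d) ≃+* 𝓞 (quadField (-d))) := by
  set s : ℂ := ((-d : ℤ) : ℂ) ^ ((1 : ℂ) / 2) with hsdef
  have hs : s * s = -d := by
    have : s ^ 2 = ((-d : ℤ) : ℂ) := by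
      rw [hsdef, one_div]
      exact_mod_cast Complex.cpow_nat_inv_pow ((-d : ℤ) : ℂ) two_ne_zero
    rw [← pow_two, this]; simp
  have hmem : s ∈ quadField (-d) := IntermediateField.mem_adjoin_simple_self ℚ s
  let sK : quadField (-d) := ⟨s, hmem⟩
  have hsK : sK * sK = ((-d : ℤ) : quadField (-d)) := by
    apply Subtype.ext
    change s * s = _
    rw [hs]; push_cast; rfl
  have hsi : IsIntegral ℤ sK := by
    refine IsIntegral.of_pow (n := 2) two_pos ?_
    have : sK ^ 2 = algebraMap ℤ (quadField (-d)) (-d) := by rw [pow_two, hsK]; simp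
    rw [this]; exact isIntegral_algebraMap
  let sO : 𝓞 (quadField (-d)) := ⟨sK, hsi⟩
  have hsO : sO * sO = ((-d : ℤ) : 𝓞 (quadField (-d))) := by
    apply RingOfIntegers.ext
    push_cast
    push_cast at hsK
    exact hsK
  refine ⟨RingEquiv.ofBijective (Zsqrtd.lift ⟨sO, hsO⟩) ⟨?_, ?_⟩⟩
  · apply Zsqrtd.lift_injective
    intro n hn
    nlinarith [mul_self_nonneg n]
  · intro w
    have hwi : IsIntegral ℤ (((w : quadField (-d)) : ℂ)) :=
      (RingOfIntegers.isIntegral_coe w).map ((quadField (-d)).val.restrictScalars ℤ)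
    obtain ⟨a, b, hab⟩ := mem_quad hs (w : quadField (-d)).2
    rw [hab] at hwi
    obtain ⟨m, n, rfl, rfl⟩ := integral_coords hd hsf hd4 hs hwi
    refine ⟨⟨m, n⟩, ?_⟩
    apply RingOfIntegers.ext
    apply Subtype.ext
    rw [hab]
    simp only [Zsqrtd.lift_apply_apply]
    push_cast
    simp [sO, sK]
    exact Or.inl rfl

theorem stmt_7 (d : ℤ) (hd3 : -d < -3) (hsf : Squarefree (-d)) (hd4 : ¬ -d ≡ 1 [ZMOD 4])
    (k : ℤ) (hk : 1 < k) (hcop : Int.gcd k (2 * d) = 1)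
    (x y z : ℕ) (hx : 0 < x) (hy : 0 < y) (hz : 0 < z) (hxy : Nat.gcd x y = 1)
    (heq : (x : ℤ) ^ 2 + d * (y : ℤ) ^ 2 = 2 * k ^ z) :
    ∃ x₁ y₁ z₁ : ℕ, 0 < x₁ ∧ 0 < y₁ ∧ 0 < z₁ ∧ Nat.gcd x₁ y₁ = 1 ∧
      z₁ ∣ z ∧ Odd (z / z₁) ∧
      (x₁ : ℤ) ^ 2 + d * (y₁ : ℤ) ^ 2 = 2 * k ^ z₁ ∧
      (∃ H : Subgroup (ClassGroup (𝓞 (quadField (-d)))), IsCyclic H ∧ Nat.card H = 2 * z₁) ∧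
      z₁ ∣ quadClassNumber (-d) := by
  have hsf' : Squarefree d := by
    intro r hr
    exact hsf r (hr.trans (by simp))
  obtain ⟨e⟩ := exists_equiv (d := d) (by omega) hsf' hd4
  have : FiniteDimensional ℚ (quadField (-d)) := by
    refine IntermediateField.adjoin.finiteDimensional ?_
    refine IsIntegral.of_pow (n := 2) two_pos ?_
    have : (((-d : ℤ) : ℂ) ^ ((1 : ℂ) / 2)) ^ 2 = algebraMap ℚ ℂ (-d) := by
      have h : (((-d : ℤ) : ℂ) ^ ((1 : ℂ) / 2)) ^ 2 = ((-d : ℤ) : ℂ) := by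
        rw [one_div]
        exact_mod_cast Complex.cpow_nat_inv_pow ((-d : ℤ) : ℂ) two_ne_zero
      rw [h]; simp
    rw [this]; exact isIntegral_algebraMap
  have : NumberField (quadField (-d)) := { }
  obtain ⟨x₁, y₁, z₁, h1, h2, h3, h4, h5, h6, h7, g, hg⟩ :=
    main_dedekind d (by omega) e k hk hcop x y z hz hxy heq
  refine ⟨x₁, y₁, z₁, h1, h2, h3, h4, h5, h6, h7, ⟨Subgroup.zpowers g, inferInstance, ?_⟩, ?_⟩
  · rw [Nat.card_zpowers, hg]
  · exact (Dvd.intro_left 2 hg.symm).trans (orderOf_dvd_natCard g)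
end

section
/- For every odd integer n ≥ 3, there are infinitely many squarefree negative integers D such that D is the squarefree part of 1 − 2k^n for some odd integer k > 1 and n divides h(D), the class number of the imaginary quadratic field ℚ(√D). -/
open IntermediateField NumberField

lemma zs_re_dvd {D : ℤ} (δ : ℤ√D) (i : ℕ) : δ.re ∣ (δ ^ (2 * i + 1)).re := by
  induction i with
  | zero => simp
  | succ i ih =>
    have : δ ^ (2 * (i + 1) + 1) = δ ^ (2 * i + 1) * (δ * δ) := by ring
    rw [this]
    simp only [Zsqrtd.re_mul, Zsqrtd.im_mul]
    refine dvd_add (ih.mul_right _) ?_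
    exact Dvd.intro (D * (δ ^ (2 * i + 1)).im * (2 * δ.im)) (by ring)

lemma zs_mod {D y L : ℤ} (h : L ∣ 1 - D * y ^ 2) (i : ℕ) :
    L ∣ ((⟨1, y⟩ : ℤ√D) ^ (i + 1)).re - 2 ^ i ∧
    L ∣ y * D * ((⟨1, y⟩ : ℤ√D) ^ (i + 1)).im - 2 ^ i := by
  induction i with
  | zero =>
    simp only [zero_add, pow_one, pow_zero, sub_self, dvd_zero, true_and]
    obtain ⟨u, hu⟩ := h
    exact ⟨-u, by linear_combination -hu⟩
  | succ i ih =>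
    obtain ⟨h1, h2⟩ := ih
    rw [pow_succ (⟨1, y⟩ : ℤ√D) (i + 1)]
    simp only [Zsqrtd.re_mul, Zsqrtd.im_mul]
    generalize ((⟨1, y⟩ : ℤ√D) ^ (i + 1)).re = a at *
    generalize ((⟨1, y⟩ : ℤ√D) ^ (i + 1)).im = b at *
    constructor
    · obtain ⟨u, hu⟩ := h1
      obtain ⟨v, hv⟩ := h2
      exact ⟨u + v, by linear_combination hu + hv⟩
    · obtain ⟨u, hu⟩ := h1
      obtain ⟨v, hv⟩ := h2
      obtain ⟨w, hw⟩ := h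
      exact ⟨u + v - w * a, by linear_combination hu + hv - a * hw⟩

lemma odd_dvd_two_pow {x : ℤ} (hx : Odd x) {j : ℕ} (h : x ∣ 2 ^ j) : x = 1 ∨ x = -1 := by
  have : IsCoprime x (2 ^ j) := by
    apply IsCoprime.pow_right
    obtain ⟨m, hm⟩ := hx
    exact ⟨1, -m, by rw [hm]; ring⟩
  have h2 := this.isUnit_of_dvd' dvd_rfl h
  exact Int.isUnit_iff.mp h2

lemma zs_final {D y : ℤ} {n j : ℕ} (hj : 1 ≤ j) (hjn : 2 * j + 1 ≤ n)
    (h : (3 ^ n : ℤ) ∣ 1 - D * y ^ 2) 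
    (h2 : ((⟨1, y⟩ : ℤ√D) ^ (2 * j + 1)).re = 2 ^ j ∨ ((⟨1, y⟩ : ℤ√D) ^ (2 * j + 1)).re = - 2 ^ j) :
    False := by
  have h1 := (zs_mod h (2 * j)).1
  have hc : IsCoprime ((3:ℤ) ^ n) (2 ^ j) := by
    apply IsCoprime.pow
    exact ⟨1, -1, by norm_num⟩
  have hb : (2:ℤ) ^ j + 1 < 3 ^ n := by
    have a1 : (2:ℤ) ^ j ≤ 2 ^ (2 * j) := pow_le_pow_right₀ (by norm_num) (by omega)
    have a2 : (2:ℤ) ^ (2 * j + 1) ≤ 2 ^ n := pow_le_pow_right₀ (by norm_num) hjn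
    have a3 : (2:ℤ) ^ n < 3 ^ n := pow_lt_pow_left₀ (by norm_num) (by norm_num) (by omega)
    have a4 : (1:ℤ) ≤ 2 ^ j := one_le_pow₀ (by norm_num)
    rw [pow_succ] at a2
    linarith
  have a5 : (2:ℤ) ≤ 2 ^ j := by
    simpa using pow_le_pow_right₀ (show (1:ℤ) ≤ 2 by norm_num) hj
  rcases h2 with h2 | h2 <;> rw [h2] at h1
  · have : (3 ^ n : ℤ) ∣ 2 ^ j * (2 ^ j - 1) := by
      obtain ⟨u, hu⟩ := h1; exact ⟨-u, by linear_combination -hu⟩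
    have := Int.le_of_dvd (by linarith) (hc.dvd_of_dvd_mul_left this)
    linarith
  · have : (3 ^ n : ℤ) ∣ 2 ^ j * (2 ^ j + 1) := by
      obtain ⟨u, hu⟩ := h1; exact ⟨-u, by linear_combination -hu⟩
    have := Int.le_of_dvd (by linarith) (hc.dvd_of_dvd_mul_left this)
    linarith

lemma zs_key {D s k : ℤ} {n r j : ℕ} (hD : D < 0) (hD4 : D % 4 = 3) (hj : 1 ≤ j) (hr : 1 ≤ r)
    (hn : n = (2 * j + 1) * r) (hk : Odd k) (h : 1 - 2 * k ^ n = D * s ^ 2)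
    (hL : (3 ^ n : ℤ) ∣ k) (δ : ℤ√D) (hδ : δ ^ (2 * j + 1) = 2 ^ j * ⟨1, s⟩) : False := by
  have h2j : (2 ^ j : ℤ√D) = ((2 ^ j : ℤ) : ℤ√D) := by push_cast; rfl
  have hN : δ.norm = 2 * k ^ r := by
    have h1 : Zsqrtd.normMonoidHom (δ ^ (2 * j + 1)) = (2 * k ^ r) ^ (2 * j + 1) := by
      rw [hδ, h2j]
      simp only [Zsqrtd.normMonoidHom, MonoidHom.coe_mk, OneHom.coe_mk, Zsqrtd.norm_mul,
        Zsqrtd.norm_intCast]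
      rw [mul_pow, ← pow_mul, mul_comm r, ← hn, Zsqrtd.norm_def]
      simp only
      rw [show 1 * 1 - D * s * s = 2 * k ^ n by linarith]
      ring
    rw [map_pow] at h1
    exact (Odd.strictMono_pow ⟨j, rfl⟩).injective h1
  have hre : (δ ^ (2 * j + 1)).re = 2 ^ j := by rw [hδ, h2j, Zsqrtd.re_smul]; simp
  rw [Zsqrtd.norm_def] at hN
  have hkr : Odd (k ^ r) := hk.pow
  have hx : Odd δ.re := by
    by_contra hx
    rw [Int.not_odd_iff_even] at hx
    obtain ⟨a, ha⟩ := hx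
    obtain ⟨m, hm⟩ := hkr
    obtain ⟨d, hd⟩ : ∃ d, D = 4 * d + 3 := ⟨D / 4, by omega⟩
    rw [ha, hm] at hN
    rcases Int.even_or_odd' δ.im with ⟨b, hb | hb⟩ <;> rw [hb, hd] at hN <;> ring_nf at hN <;> omega
  have hLn : (3 ^ n : ℤ) ∣ 2 * k ^ r := (hL.trans (dvd_pow_self k (by omega))).mul_left _
  have hle : 2 * j + 1 ≤ n := by rw [hn]; exact Nat.le_mul_of_pos_right _ hr
  rcases odd_dvd_two_pow hx (hre ▸ zs_re_dvd δ j) with h1 | h1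
  · have e : δ = ⟨1, δ.im⟩ := by ext <;> simp [h1]
    rw [e] at hre
    refine zs_final hj hle ?_ (Or.inl hre)
    rw [h1] at hN
    convert hLn using 1
    linarith
  · have e : δ = - ⟨1, - δ.im⟩ := by ext <;> simp [h1]
    rw [e, Odd.neg_pow ⟨j, rfl⟩] at hre
    refine zs_final (D := D) (y := - δ.im) hj hle ?_ (Or.inr ?_)
    · rw [h1] at hN
      convert hLn using 1
      linarith
    · rw [← hre]; simp

lemma zs_unit {D : ℤ} (hD : D < -1) (u : ℤ√D) (hu : IsUnit u) : u = 1 ∨ u = -1 := by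
  rw [← Zsqrtd.norm_eq_one_iff' (by omega), Zsqrtd.norm_def] at hu
  have him : u.im = 0 := by
    by_contra h
    have : 1 ≤ u.im * u.im := by
      have := mul_self_pos.mpr h
      omega
    nlinarith [mul_self_nonneg u.re]
  rw [him] at hu
  have : u.re * u.re = 1 := by linarith
  rcases mul_self_eq_one_iff.mp this with h | h
  · left; ext <;> simp [h, him]
  · right; ext <;> simp [h, him]

theorem class_dvd {R : Type*} [CommRing R] [IsDedekindDomain R] {D s k : ℤ} {n : ℕ}
    (e : ℤ√D ≃+* R) (hD : D < -1) (hD4 : D % 4 = 3) (hn : 0 < n) (hno : Odd n) (hk : Odd k)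
    (h : 1 - 2 * k ^ n = D * s ^ 2) (hL : (3 ^ n : ℤ) ∣ k) :
    n ∣ Nat.card (ClassGroup R) := by
  classical
  set a : ℤ√D := ⟨1 - k ^ n, s⟩ with ha
  set a' : ℤ√D := ⟨1 - k ^ n, -s⟩ with ha'
  set η : ℤ√D := ⟨1, s⟩ with hη
  have hmul : a * a' = ((k ^ 2 : ℤ) : ℤ√D) ^ n := by
    rw [← Int.cast_pow]
    ext
    · simp only [ha, ha', Zsqrtd.re_mul, Zsqrtd.re_intCast]
      rw [← pow_mul, mul_comm 2, pow_mul]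
      linear_combination h
    · simp only [ha, ha', Zsqrtd.im_mul, Zsqrtd.im_intCast]
      ring
  have hadd : a + a' = ((2 * (1 - k ^ n) : ℤ) : ℤ√D) := by
    ext
    · simp only [ha, ha', Zsqrtd.re_add, Zsqrtd.re_intCast]; ring
    · simp only [ha, ha', Zsqrtd.im_add, Zsqrtd.im_intCast]; ring
  have h2a : 2 * a = η ^ 2 := by
    have h2 : (2 : ℤ√D) = ((2 : ℤ) : ℤ√D) := by norm_cast
    rw [h2, sq]
    ext
    · rw [Zsqrtd.re_smul]
      simp only [ha, hη, Zsqrtd.re_mul]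
      linear_combination h
    · rw [Zsqrtd.im_smul]
      simp only [ha, hη, Zsqrtd.im_mul]
      ring
  have hcopZ : IsCoprime (2 * (1 - k ^ n)) ((k ^ 2) ^ n) := by
    rw [← pow_mul]
    apply IsCoprime.pow_right
    apply IsCoprime.mul_left
    · obtain ⟨m, hm⟩ := hk
      exact ⟨-m, 1, by rw [hm]; ring⟩
    · obtain ⟨m, rfl⟩ : ∃ m, n = m + 1 := ⟨n - 1, by omega⟩
      exact ⟨1, k ^ m, by ring⟩
  have hcop : IsCoprime a a' := by
    obtain ⟨u, v, huv⟩ := hcopZ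
    have huv' := congrArg (Int.cast : ℤ → ℤ√D) huv
    rw [Int.cast_add, Int.cast_mul u, Int.cast_mul v, Int.cast_pow (k ^ 2) n, ← hadd, ← hmul, Int.cast_one] at huv'
    exact ⟨u + v * a', u, by linear_combination huv'⟩
  have hcopR : IsCoprime (Ideal.span {e a}) (Ideal.span {e a'}) := by
    rw [Ideal.isCoprime_span_singleton_iff]
    exact hcop.map e.toRingHom
  have hmulR : Ideal.span {e a} * Ideal.span {e a'} = Ideal.span {e ((k ^ 2 : ℤ) : ℤ√D)} ^ n := by
    rw [Ideal.span_singleton_mul_span_singleton, ← map_mul, hmul, map_pow,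
      Ideal.span_singleton_pow]
  obtain ⟨B, hB⟩ := exists_eq_pow_of_mul_eq_pow_of_coprime hcopR hmulR
  have hk0 : k ≠ 0 := by rintro rfl; simp at hk
  have ha0 : a ≠ 0 := by
    intro h0
    rw [h0, zero_mul, ← Int.cast_pow] at hmul
    have := congrArg Zsqrtd.re hmul
    simp only [Zsqrtd.re_zero, Zsqrtd.re_intCast] at this
    exact pow_ne_zero n (pow_ne_zero 2 hk0) this.symm
  have hea0 : e a ≠ 0 := by simpa using ha0
  have hB0 : B ≠ 0 := by
    rintro rfl
    rw [zero_pow hn.ne'] at hB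
    exact hea0 (by simpa using hB)
  have hBm : B ∈ nonZeroDivisors (Ideal R) := mem_nonZeroDivisors_of_ne_zero hB0
  have hord : orderOf (ClassGroup.mk0 ⟨B, hBm⟩) = n := by
    apply orderOf_eq_of_pow_and_pow_div_prime hn
    · rw [← map_pow, SubmonoidClass.mk_pow, ClassGroup.mk0_eq_one_iff, ← hB]
      exact ⟨_, rfl⟩
    · intro p hp hpn hone
      rw [← map_pow, SubmonoidClass.mk_pow, ClassGroup.mk0_eq_one_iff] at hone
      obtain ⟨b, hb⟩ := hone
      rw [Ideal.submodule_span_eq] at hb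
      obtain ⟨r, hr⟩ := hpn
      have hnp : n / p = r := by rw [hr]; exact Nat.mul_div_cancel_left _ hp.pos
      have hpo : Odd p := (Nat.odd_mul.mp (hr ▸ hno)).1
      have hspan : Ideal.span {e a} = Ideal.span {b ^ p} := by
        rw [hB, ← Ideal.span_singleton_pow, ← hb, hnp, ← pow_mul, mul_comm r, ← hr]
      rw [Ideal.span_singleton_eq_span_singleton] at hspan
      obtain ⟨u, hu⟩ := hspan.symm
      obtain ⟨β, hβ⟩ : ∃ β : ℤ√D, a = β ^ p := by
        have hu' : e.symm u = 1 ∨ e.symm u = -1 := zs_unit hD _ (u.isUnit.map e.symm)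
        have hh : a = (e.symm b) ^ p * e.symm u := by
          apply e.injective
          simp [hu]
        rcases hu' with h1 | h1
        · exact ⟨_, by rw [hh, h1, mul_one]⟩
        · exact ⟨- e.symm b, by rw [hh, h1, hpo.neg_pow, mul_neg_one]⟩
      obtain ⟨j, hj⟩ := hpo
      have hp2 := hp.two_le
      have hdvd : (e β ^ j) ^ 2 ∣ (e η) ^ 2 := by
        refine ⟨e (2 * β), ?_⟩
        rw [← map_pow, ← map_pow, ← map_pow, ← map_mul, ← h2a, hβ, hj]
        congr 1
        ring
      rw [IsIntegrallyClosed.pow_dvd_pow_iff two_ne_zero] at hdvd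
      obtain ⟨d, hd⟩ := hdvd
      have hd' : η = β ^ j * e.symm d := by
        apply e.injective
        simp [hd]
      have hβ0 : β ≠ 0 := by
        rintro rfl
        rw [zero_pow hp.ne_zero] at hβ
        exact ha0 hβ
      have : IsDomain (ℤ√D) := e.toMulEquiv.isDomain _
      have hdd : (e.symm d) ^ 2 = 2 * β := by
        apply mul_left_cancel₀ (pow_ne_zero 2 (pow_ne_zero j hβ0))
        rw [← mul_pow, ← hd', ← h2a, hβ, hj]
        ring
      refine zs_key (D := D) (s := s) (k := k) (n := n) (r := r) (j := j) (by omega) hD4 (by omega)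
        ?_ (by rw [hr, hj]) hk h hL (e.symm d) ?_
      · rcases Nat.eq_zero_or_pos r with h0 | h0
        · rw [h0] at hr; omega
        · exact h0
      · rw [pow_succ, pow_mul, hdd, mul_pow, mul_assoc, ← hd']
  rw [← hord]
  exact orderOf_dvd_natCard _

lemma theta_sq (D : ℤ) : ((D : ℂ) ^ ((1 : ℂ) / 2)) * ((D : ℂ) ^ ((1 : ℂ) / 2)) = (D : ℂ) := by
  have := Complex.cpow_nat_inv_pow (D : ℂ) (n := 2) two_ne_zero
  rw [← sq, one_div]
  exact_mod_cast this

lemma conj_of_sq {D : ℤ} (hD : D < 0) {θ : ℂ} (h : θ * θ = (D : ℂ)) : (starRingEnd ℂ) θ = -θ := by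
  have h1 := congrArg Complex.re h
  have h2 := congrArg Complex.im h
  simp only [Complex.mul_re, Complex.mul_im, Complex.intCast_re, Complex.intCast_im] at h1 h2
  have hD' : (D : ℝ) < 0 := by exact_mod_cast hD
  have hre : θ.re = 0 := by
    by_contra hne
    have : θ.im = 0 := by
      have : θ.re * θ.im = 0 := by linarith
      rcases mul_eq_zero.mp this with h | h
      · exact absurd h hne
      · exact h
    rw [this] at h1
    nlinarith [mul_self_nonneg θ.re]
  apply Complex.ext <;> simp [hre]

lemma rat_int_of_integral {r : ℚ} (h : IsIntegral ℤ (r : ℂ)) : ∃ z : ℤ, (z : ℚ) = r := by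
  have h' : IsIntegral ℤ (algebraMap ℚ ℂ r) := by simpa using h
  rw [isIntegral_algebraMap_iff (algebraMap ℚ ℂ).injective] at h'
  simpa using IsIntegrallyClosed.isIntegral_iff.mp h'

lemma int_of_sqfree {D : ℤ} (hs : Squarefree D) {q : ℚ} {z : ℤ} (h : (D : ℚ) * q ^ 2 = z) :
    ∃ b : ℤ, (b : ℚ) = q := by
  have hq : (q.den : ℚ) ≠ 0 := by exact_mod_cast q.den_nz
  have h1 : D * q.num ^ 2 = z * (q.den : ℤ) ^ 2 := by
    have : (D : ℚ) * q.num ^ 2 = z * (q.den : ℚ) ^ 2 := by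
      rw [← h]
      nth_rewrite 2 [← Rat.num_div_den q]
      field_simp
    exact_mod_cast this
  have hc : IsCoprime ((q.den : ℤ) ^ 2) (q.num ^ 2) := by
    apply IsCoprime.pow
    rw [Int.isCoprime_iff_gcd_eq_one, Int.gcd_comm]
    simpa [Int.gcd] using q.reduced
  have h2 : (q.den : ℤ) ^ 2 ∣ D := hc.dvd_of_dvd_mul_right (Dvd.intro_left _ h1.symm)
  have h3 := hs (q.den : ℤ) (by rwa [← sq])
  have h4 : q.den = 1 := by
    rcases Int.isUnit_iff.mp h3 with h | h
    · exact_mod_cast h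
    · omega
  exact ⟨q.num, Rat.coe_int_num_of_den_eq_one h4⟩

lemma quad_mem {D : ℤ} {x : ℂ} (hx : x ∈ quadField D) :
    ∃ r q : ℚ, x = r + q * ((D : ℂ) ^ ((1 : ℂ) / 2)) := by
  have hθ := theta_sq D
  have hθint : IsIntegral ℚ ((D : ℂ) ^ ((1 : ℂ) / 2)) := by
    refine ⟨Polynomial.X ^ 2 - Polynomial.C (D : ℚ), Polynomial.monic_X_pow_sub_C _ two_ne_zero, ?_⟩
    simp only [Polynomial.eval₂_sub, Polynomial.eval₂_X_pow, Polynomial.eval₂_C]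
    rw [sq, hθ]
    simp
  have hx' : x ∈ Algebra.adjoin ℚ {((D : ℂ) ^ ((1 : ℂ) / 2))} := by
    rw [← IntermediateField.adjoin_simple_toSubalgebra_of_isAlgebraic hθint.isAlgebraic]
    exact hx
  clear hx
  generalize ((D : ℂ) ^ ((1 : ℂ) / 2)) = θ at *
  induction hx' using Algebra.adjoin_induction with
  | mem x hx =>
    rw [Set.mem_singleton_iff] at hx
    exact ⟨0, 1, by simp [hx]⟩
  | algebraMap r => exact ⟨r, 0, by simp⟩
  | add x y hx hy h1 h2 =>
    obtain ⟨r, q, rfl⟩ := h1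
    obtain ⟨r', q', rfl⟩ := h2
    exact ⟨r + r', q + q', by push_cast; ring⟩
  | mul x y hx hy h1 h2 =>
    obtain ⟨r, q, rfl⟩ := h1
    obtain ⟨r', q', rfl⟩ := h2
    exact ⟨r * r' + q * q' * D, r * q' + q * r', by
      push_cast; linear_combination (q * q' : ℂ) * hθ⟩

instance quadField_numberField (D : ℤ) : NumberField (quadField D) where
  to_charZero := inferInstance
  to_finiteDimensional := by
    have hθint : IsIntegral ℚ ((D : ℂ) ^ ((1 : ℂ) / 2)) := by
      refine ⟨Polynomial.X ^ 2 - Polynomial.C (D : ℚ),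
        Polynomial.monic_X_pow_sub_C _ two_ne_zero, ?_⟩
      simp only [Polynomial.eval₂_sub, Polynomial.eval₂_X_pow, Polynomial.eval₂_C]
      rw [sq, theta_sq D]
      simp
    exact IntermediateField.adjoin.finiteDimensional hθint

lemma integral_form {D : ℤ} (hD : D < 0) (hs : Squarefree D) (hD4 : D % 4 = 3) {x : ℂ}
    (hx : x ∈ quadField D) (hi : IsIntegral ℤ x) :
    ∃ a b : ℤ, x = a + b * ((D : ℂ) ^ ((1 : ℂ) / 2)) := by
  obtain ⟨r, q, rfl⟩ := quad_mem hx
  have hθ := theta_sq D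
  have hc := conj_of_sq hD hθ
  generalize ((D : ℂ) ^ ((1 : ℂ) / 2)) = θ at *
  have hi' : IsIntegral ℤ ((r : ℂ) - q * θ) := by
    have := hi.map ((starRingEnd ℂ).toIntAlgHom)
    simpa [hc, sub_eq_add_neg] using this
  obtain ⟨A, hA⟩ : ∃ z : ℤ, (z : ℚ) = 2 * r := by
    apply rat_int_of_integral
    have := hi.add hi'
    convert! this using 1
    push_cast; ring
  obtain ⟨N, hN⟩ : ∃ z : ℤ, (z : ℚ) = r ^ 2 - D * q ^ 2 := by
    apply rat_int_of_integral
    have := hi.mul hi'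
    convert! this using 1
    push_cast; linear_combination (q : ℂ) ^ 2 * hθ
  obtain ⟨B, hB⟩ : ∃ b : ℤ, (b : ℚ) = 2 * q := by
    apply int_of_sqfree hs (z := A ^ 2 - 4 * N)
    push_cast
    rw [hA, hN]; ring
  have hABN : A ^ 2 - D * B ^ 2 = 4 * N := by
    have : (A : ℚ) ^ 2 - D * B ^ 2 = 4 * N := by rw [hA, hB, hN]; ring
    exact_mod_cast this
  obtain ⟨d, hd⟩ : ∃ d, D = 4 * d + 3 := ⟨D / 4, by omega⟩
  obtain ⟨a, b, rfl, rfl⟩ : ∃ a b, A = 2 * a ∧ B = 2 * b := by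
    rcases Int.even_or_odd' A with ⟨a, ha | ha⟩ <;> rcases Int.even_or_odd' B with ⟨b, hb | hb⟩
    · exact ⟨a, b, ha, hb⟩
    all_goals
      exfalso
      rw [ha, hb, hd] at hABN
      ring_nf at hABN
      omega
  have hr : r = a := by push_cast at hA; linarith
  have hq : q = b := by push_cast at hB; linarith
  exact ⟨a, b, by rw [hr, hq]; push_cast; rfl⟩

lemma ring_equiv {D : ℤ} (hD : D < 0) (hs : Squarefree D) (hD4 : D % 4 = 3) :
    Nonempty (ℤ√D ≃+* 𝓞 (quadField D)) := by
  have hθ := theta_sq D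
  have hmem : ((D : ℂ) ^ ((1 : ℂ) / 2)) ∈ quadField D :=
    IntermediateField.mem_adjoin_simple_self ℚ _
  let t : quadField D := ⟨_, hmem⟩
  have ht : t * t = (D : quadField D) := by
    apply Subtype.ext
    simpa [t] using hθ
  have hti : IsIntegral ℤ t := by
    refine ⟨Polynomial.X ^ 2 - Polynomial.C D, Polynomial.monic_X_pow_sub_C _ two_ne_zero, ?_⟩
    simp only [Polynomial.eval₂_sub, Polynomial.eval₂_X_pow, Polynomial.eval₂_C]
    rw [sq, ht]
    simp
  let w : 𝓞 (quadField D) := ⟨t, hti⟩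
  have hw : w * w = (D : 𝓞 (quadField D)) := by
    apply RingOfIntegers.ext
    change algebraMap (𝓞 (quadField D)) (quadField D) (w * w)
      = algebraMap (𝓞 (quadField D)) (quadField D) (D : 𝓞 (quadField D))
    rw [map_mul, map_intCast]
    exact ht
  let f : ℤ√D →+* 𝓞 (quadField D) := Zsqrtd.lift ⟨w, hw⟩
  refine ⟨RingEquiv.ofBijective f ⟨Zsqrtd.lift_injective _ ?_, ?_⟩⟩
  · intro m hm
    nlinarith [mul_self_nonneg m]
  · intro x
    have hxi : IsIntegral ℤ ((x : quadField D) : ℂ) :=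
      (RingOfIntegers.isIntegral_coe x).map ((quadField D).val.restrictScalars ℤ)
    obtain ⟨a, b, hab⟩ := integral_form hD hs hD4 (x : quadField D).2 hxi
    refine ⟨⟨a, b⟩, ?_⟩
    apply RingOfIntegers.ext
    apply Subtype.ext
    rw [hab]
    have hf : f ⟨a, b⟩ = (a : 𝓞 (quadField D)) + b * w := rfl
    rw [hf]
    change ((algebraMap (𝓞 (quadField D)) (quadField D) (a + b * w) : quadField D) : ℂ) = _
    rw [map_add, map_mul, map_intCast, map_intCast]
    have hwt : algebraMap (𝓞 (quadField D)) (quadField D) w = t := rfl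
    rw [hwt]
    simp [t]

theorem main_dvd {D s k : ℤ} {n : ℕ} (hD : D < -1) (hs : Squarefree D) (hD4 : D % 4 = 3)
    (hn : 0 < n) (hno : Odd n) (hk : Odd k)
    (h : 1 - 2 * k ^ n = D * s ^ 2) (hL : (3 ^ n : ℤ) ∣ k) : n ∣ quadClassNumber D := by
  obtain ⟨e⟩ := ring_equiv (by omega) hs hD4
  exact class_dvd e hD hD4 hn hno hk h hL

lemma sqpart_mod {D s k : ℤ} {n : ℕ} (hk : Odd k) (h : 1 - 2 * k ^ n = D * s ^ 2) : D % 4 = 3 := by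
  have hkn : Odd (k ^ n) := hk.pow
  obtain ⟨m, hm⟩ := hkn
  rw [hm] at h
  rcases Int.even_or_odd' s with ⟨b, hb | hb⟩ <;> rw [hb] at h
  · have : D * (2 * b) ^ 2 = 4 * (D * b ^ 2) := by ring
    omega
  · have : D * (2 * b + 1) ^ 2 = 4 * (D * (b ^ 2 + b)) + D := by ring
    omega

lemma exists_k {n : ℕ} (hn : 3 ≤ n) (hno : Odd n) {M : ℤ} (hM : 0 < M) (hMo : Odd M) :
    ∃ (k : ℤ) (q : ℕ), q.Prime ∧ Odd k ∧ 1 < k ∧ (3 ^ n : ℤ) ∣ k ∧ (q : ℤ) ∣ 2 * k ^ n - 1 ∧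
      ¬ ((q : ℤ) ^ 2 ∣ 2 * k ^ n - 1) ∧ ¬ ((q : ℤ) ∣ M) := by
  set k0 : ℤ := 3 ^ n * n * M with hk0
  have h3 : (1:ℤ) < 3 ^ n := one_lt_pow₀ (by norm_num) (by omega)
  have hnZ : (3:ℤ) ≤ n := by exact_mod_cast hn
  have h3n : (1:ℤ) < 3 ^ n * n := by nlinarith
  have hk1 : 1 < k0 := by nlinarith
  have hk0o : Odd k0 := by
    refine Odd.mul (Odd.mul (Odd.pow (by decide)) (by exact_mod_cast hno)) hMo
  have hpow : 1 < k0 ^ n := one_lt_pow₀ hk1 (by omega)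
  have hne : (2 * k0 ^ n - 1).natAbs ≠ 1 := by omega
  obtain ⟨q, hq, hqd⟩ := Nat.exists_prime_and_dvd hne
  rw [← Int.natCast_dvd] at hqd
  have hqp : Prime (q : ℤ) := Nat.prime_iff_prime_int.mp hq
  have hqk : ¬ (q : ℤ) ∣ k0 := by
    intro hd
    have h1 : (q : ℤ) ∣ 2 * k0 ^ n := (dvd_pow hd (by omega)).mul_left _
    have := (dvd_sub h1 hqd)
    rw [sub_sub_cancel] at this
    exact hqp.not_isUnit (isUnit_of_dvd_one this)
  have hq3 : ¬ (q : ℤ) ∣ 3 ^ n := fun hd => hqk ((hd.mul_right _).mul_right _)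
  have hqn : ¬ (q : ℤ) ∣ n := fun hd => hqk ((hd.mul_left _).mul_right _)
  have hqM : ¬ (q : ℤ) ∣ M := fun hd => hqk (hd.mul_left _)
  have hq2 : ¬ (q : ℤ) ∣ 2 := by
    intro hd
    have h1 : (q : ℤ) ∣ 2 * k0 ^ n := hd.mul_right _
    have := (dvd_sub h1 hqd)
    rw [sub_sub_cancel] at this
    exact hqp.not_isUnit (isUnit_of_dvd_one this)
  have h3k : (3 ^ n : ℤ) ∣ k0 := ⟨n * M, by rw [hk0]; ring⟩
  by_cases hsq : (q : ℤ) ^ 2 ∣ 2 * k0 ^ n - 1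
  · have hq0 : (0:ℤ) < q := by exact_mod_cast hq.pos
    obtain ⟨c, hc⟩ : ∃ c : ℤ, (k0 + 2 * q * 3 ^ n) ^ n
        = k0 ^ n + n * k0 ^ (n - 1) * (2 * q * 3 ^ n) + c * (2 * q * 3 ^ n) ^ 2 := by
      obtain ⟨c, hc⟩ := Polynomial.powAddExpansion k0 (2 * (q : ℤ) * 3 ^ n) n
      exact ⟨c, by rw [hc]⟩
    refine ⟨k0 + 2 * q * 3 ^ n, q, hq, ?_, ?_, ?_, ?_, ?_, hqM⟩
    · exact hk0o.add_even ⟨q * 3 ^ n, by ring⟩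
    · have : 0 < 2 * (q : ℤ) * 3 ^ n := by positivity
      omega
    · exact dvd_add h3k (Dvd.intro_left _ rfl)
    · rw [hc]
      obtain ⟨u, hu⟩ := hqd
      exact ⟨u + n * k0 ^ (n - 1) * (4 * 3 ^ n) + 8 * c * q * (3 ^ n) ^ 2,
        by linear_combination hu⟩
    · intro hd
      rw [hc] at hd
      obtain ⟨u, hu⟩ := hsq
      obtain ⟨v, hv⟩ := hd
      have h1 : (q : ℤ) * (2 * 2 * n * k0 ^ (n - 1) * 3 ^ n)
          = q * (q * (v - u - 8 * c * (3 ^ n) ^ 2)) := by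
        linear_combination hv - hu
      have h2 := mul_left_cancel₀ hq0.ne' h1
      have h3 : (q : ℤ) ∣ 2 * 2 * n * k0 ^ (n - 1) * 3 ^ n := ⟨_, h2⟩
      rcases hqp.dvd_or_dvd h3 with h | h
      · rcases hqp.dvd_or_dvd h with h | h
        · rcases hqp.dvd_or_dvd h with h | h
          · rcases hqp.dvd_or_dvd h with h | h <;> exact hq2 h
          · exact hqn h
        · exact hqk (hqp.dvd_of_dvd_pow h)
      · exact hq3 h
  · exact ⟨k0, q, hq, hk0o, hk1, h3k, hqd, hsq, hqM⟩

theorem stmt_13 (n : ℕ) (hn : 3 ≤ n) (hno : Odd n) :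
    {D : ℤ | D < 0 ∧ Squarefree D ∧
      (∃ k s : ℤ, Odd k ∧ 1 < k ∧ 0 < s ∧ 1 - 2 * k ^ n = D * s ^ 2) ∧
      n ∣ quadClassNumber D}.Infinite := by
  intro hfin
  set S := hfin.toFinset with hS
  have hodd : Odd (∏ D ∈ S, |D|) := by
    apply Finset.prod_induction _ Odd (fun a b => Odd.mul) odd_one
    intro D hD
    rw [hS, Set.Finite.mem_toFinset] at hD
    obtain ⟨-, -, ⟨k, s, hk, -, -, h⟩, -⟩ := hD
    have := sqpart_mod hk h
    rw [odd_abs, Int.odd_iff]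
    omega
  have hpos : 0 < ∏ D ∈ S, |D| := by
    apply Finset.prod_pos
    intro D hD
    rw [hS, Set.Finite.mem_toFinset] at hD
    exact abs_pos.mpr hD.1.ne
  obtain ⟨k, q, hq, hk, hk1, hL, hqd, hqs, hqM⟩ := exists_k hn hno hpos hodd
  have hkn : 1 < k ^ n := one_lt_pow₀ hk1 (by omega)
  obtain ⟨a, b, ha, hb, hab, hsf⟩ := Nat.sq_mul_squarefree_of_pos (n := (2 * k ^ n - 1).toNat)
    (by omega)
  have hab' : (b : ℤ) ^ 2 * a = 2 * k ^ n - 1 := by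
    have := congrArg (Nat.cast : ℕ → ℤ) hab
    rw [Int.toNat_of_nonneg (by omega)] at this
    exact_mod_cast this
  have heq : 1 - 2 * k ^ n = (-(a : ℤ)) * (b : ℤ) ^ 2 := by linear_combination hab'
  have hqp : Prime (q : ℤ) := Nat.prime_iff_prime_int.mp hq
  have hqa : (q : ℤ) ∣ a := by
    rw [← hab'] at hqd hqs
    rcases hqp.dvd_or_dvd hqd with h | h
    · exact absurd ((pow_dvd_pow_of_dvd (hqp.dvd_of_dvd_pow h) 2).mul_right _) hqs
    · exact h
  have hsD : Squarefree (-(a : ℤ)) := by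
    rw [← Int.squarefree_natAbs]; simpa using hsf
  have hq2 := hq.two_le
  have hqle := Int.le_of_dvd (by exact_mod_cast ha) hqa
  have hmem : (-(a : ℤ)) ∈ S := by
    rw [hS, Set.Finite.mem_toFinset]
    refine ⟨by omega, hsD, ⟨k, b, hk, hk1, by exact_mod_cast hb, heq⟩, ?_⟩
    exact main_dvd (by omega) hsD (sqpart_mod hk heq) (by omega) hno hk heq hL
  apply hqM
  have h1 : |(-(a : ℤ))| ∣ ∏ D ∈ S, |D| := Finset.dvd_prod_of_mem _ hmem
  refine dvd_trans ?_ h1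
  rw [dvd_abs, dvd_neg]
  exact hqa
end
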